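/- Every 8×11 sign matrix has at most 11 3-neighborly plain travels. (Equivalently, every rank 8 Lawrence oriented matroid on 11 elements has at most c_8(11,3) = 22 3-neighborly reorientations.) -/

import Mathlib

/-- An `r × n` sign matrix: entries in `{+1, -1}` (1-indexed: `1 ≤ i ≤ r`, `1 ≤ j ≤ n`). -/
def IsSignMatrix (r n : ℕ) (A : ℕ → ℕ → ℤ) : Prop :=
  ∀ i j, 1 ≤ i → i ≤ r → 1 ≤ j → j ≤ n → A i j = 1 ∨ A i j = -1

/-- `A_S`: the matrix obtained from `A` by negating every entry of each column in `S`. -/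
def reorient (A : ℕ → ℕ → ℤ) (S : Finset ℕ) : ℕ → ℕ → ℤ :=
  fun i j => if j ∈ S then -A i j else A i j

/-- The first column `c'` with `c < c' ≤ n` where row `i` changes sign relative to
entry `a_{i,c}`, if such a column exists. -/
def rowChange (A : ℕ → ℕ → ℤ) (n i c : ℕ) : Option ℕ :=
  (List.range (n + 1)).find? fun c' => decide (c < c' ∧ A i c' ≠ A i c)

/-- `ttEntry A n i` is the column at which the top travel of `A` enters row `i`
(rows and columns 1-indexed): the travel enters row 1 at column 1, and, having entered
row `i` at column `c`, it enters row `i+1` at the first sign change of row `i` after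
column `c` (if any).  The value `some` at the "virtual" row `r+1` means the top travel
had a sign change in the bottom row `r`, i.e. the top travel is positive. -/
def ttEntry (A : ℕ → ℕ → ℤ) (n : ℕ) : ℕ → Option ℕ
  | 0 => none
  | 1 => some 1
  | i + 2 => (ttEntry A n (i + 1)).bind (rowChange A n (i + 1))

/-- The top travel of the `r × n` sign matrix `A` is positive: it contains two
horizontally consecutive entries of row `r` with opposite signs. -/
def ttPositive (A : ℕ → ℕ → ℤ) (r n : ℕ) : Prop :=
  (ttEntry A n (r + 1)).isSome

/-- `A` is `k`-neighborly: for every set `S` of at most `k` columns, the top travel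
of `A_S` is not positive. -/
def IsNeighborly (A : ℕ → ℕ → ℤ) (r n k : ℕ) : Prop :=
  ∀ S : Finset ℕ, S ⊆ Finset.Icc 1 n → S.card ≤ k → ¬ ttPositive (reorient A S) r n

/-- A plain travel of an `r × n` sign matrix, identified with the set `D` of columns of
its downward (vertical) moves: the columns `2 ≤ j₁ < ⋯ < j_{s-1} ≤ n` with `s ≤ r`. -/
def IsPlainTravel (r n : ℕ) (D : Finset ℕ) : Prop :=
  D ⊆ Finset.Icc 2 n ∧ D.card ≤ r - 1

/-- The top travel of `A` follows exactly the plain travel with downward-move columns `D`: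
it makes its downward moves precisely at the columns of `D` (entering rows `2, …, |D|+1`
there) and then ends at column `n` in row `|D|+1` without a further sign change. -/
def ttFollows (A : ℕ → ℕ → ℤ) (n : ℕ) (D : Finset ℕ) : Prop :=
  ttEntry A n (D.card + 2) = none ∧
  ∀ c, c ∈ D ↔ ∃ i, 2 ≤ i ∧ i ≤ D.card + 1 ∧ ttEntry A n i = some c

/-- The plain travel `D` of `A` is `k`-neighborly: there is a set `R` of columns such that
the top travel of `A_R` follows exactly the path `D` and `A_R` is a `k`-neighborly matrix. -/
def IsNeighborlyTravel (A : ℕ → ℕ → ℤ) (r n k : ℕ) (D : Finset ℕ) : Prop :=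
  ∃ R : Finset ℕ, R ⊆ Finset.Icc 1 n ∧ ttFollows (reorient A R) n D ∧
    IsNeighborly (reorient A R) r n k

/-!
Let `M` be the Lawrence oriented matroid of an `r × n` sign matrix with `r = 2k + 2` and
`n = 2k + 5`. A reorientation of `M` is `k`-neighborly only if each of its circuits, which have
`2k + 3` elements, has more than `k` elements of either sign, that is, if the signs of each circuit
sum to `±1`. Since a sum of `2q + 1` signs equal to `±1` is `(-1)^q` times their product, in terms
of the dual chirotope `χ` of rank `3` the sign vectors `x` of these reorientations, normalised to
have product `1`, satisfy `xᵢ xⱼ = μᵢⱼ ∑ₖ χ(i,j,k) xₖ` with signs `μᵢⱼ = -μⱼᵢ` that do not depend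
on `x`. Hence on the set `V` of these vectors the coordinate functions span a space containing
the product of any two distinct ones. Comparing `(xᵢ xⱼ) xₖ` with `(xⱼ xₖ) xᵢ` for some
`μᵢⱼ ≠ μⱼₖ` shows that it also contains `1 = xᵢ²`, so it is an algebra of dimension at most `n` that
separates the points of `V`, and `|V| ≤ n`.
Normalising the product loses no travels: negating a whole matrix does not change its top travel,
and `n` is odd.
-/

section SignSums

open Finset

variable {κ : Type*} {s : Finset κ} {x : κ → ℤ}

theorem sum_eq_card_sub_two_mul_card_neg (hx : ∀ i ∈ s, IsUnit (x i)) :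
    ∑ i ∈ s, x i = #s - 2 * #{i ∈ s | x i = -1} := by
  have hterm : ∀ i ∈ s, x i = 1 - 2 * if x i = -1 then 1 else 0 := fun i hi => by
    rcases Int.isUnit_iff.mp (hx i hi) with h | h <;> simp [h]
  rw [sum_congr rfl hterm, sum_sub_distrib, ← mul_sum, sum_boole]
  simp

theorem prod_eq_neg_one_pow_card_neg (hx : ∀ i ∈ s, IsUnit (x i)) :
    ∏ i ∈ s, x i = (-1) ^ #{i ∈ s | x i = -1} := by
  have hterm : ∀ i ∈ s, x i = if x i = -1 then -1 else 1 := fun i hi => by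
    rcases Int.isUnit_iff.mp (hx i hi) with h | h <;> simp [h]
  rw [prod_congr rfl hterm, prod_ite]
  simp

theorem isUnit_sum_of_lt_card {k : ℕ} (hx : ∀ i ∈ s, IsUnit (x i)) (hs : #s = 2 * k + 3)
    (hpos : k < #{i ∈ s | x i = 1}) (hneg : k < #{i ∈ s | x i = -1}) :
    IsUnit (∑ i ∈ s, x i) := by
  have hcard : #{i ∈ s | x i = 1} + #{i ∈ s | x i = -1} = #s := by
    rw [← card_filter_add_card_filter_not (s := s) (fun i => x i = 1)]
    congr 2
    refine filter_congr fun i hi => ?_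
    rcases Int.isUnit_iff.mp (hx i hi) with h | h <;> simp [h]
  rw [sum_eq_card_sub_two_mul_card_neg hx, Int.isUnit_iff]
  omega

theorem sum_eq_neg_one_pow_mul_prod {q : ℕ} (hx : ∀ i ∈ s, IsUnit (x i)) (hs : #s = 2 * q + 1)
    (hsum : IsUnit (∑ i ∈ s, x i)) : ∑ i ∈ s, x i = (-1) ^ q * ∏ i ∈ s, x i := by
  rw [prod_eq_neg_one_pow_card_neg hx, ← pow_add]
  rw [sum_eq_card_sub_two_mul_card_neg hx, hs, Int.isUnit_iff] at *
  rcases hsum with h | h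
  · rw [h, show #{i ∈ s | x i = -1} = q by omega, (Even.add_self q).neg_one_pow]
  · rw [h, show #{i ∈ s | x i = -1} = q + 1 by omega, ← add_assoc,
      (Even.add_self q).add_one.neg_one_pow]

end SignSums

section SpanAlgebra

variable {ι K : Type*} [Fintype ι] [Field K]

theorem card_le_card_of_mul_mem_span {V : Type*} [Fintype V] {f : ι → V → K}
    (hone : 1 ∈ Submodule.span K (Set.range f))
    (hmul : ∀ i j, f i * f j ∈ Submodule.span K (Set.range f))
    (hsep : Function.Injective fun v i => f i v) : Fintype.card V ≤ Fintype.card ι := by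
  have hle : Submodule.span K (Set.range f) * Submodule.span K (Set.range f) ≤
      Submodule.span K (Set.range f) := by
    rw [Submodule.span_mul_span, Submodule.span_le]
    rintro _ ⟨_, ⟨i, rfl⟩, _, ⟨j, rfl⟩, rfl⟩
    exact hmul i j
  let S : Subalgebra K (V → K) := (Submodule.span K (Set.range f)).toSubalgebra hone
    fun _ _ hg hh => hle (Submodule.mul_mem_mul hg hh)
  have heval : Function.Injective fun v => (Pi.evalAlgHom K (fun _ : V => K) v).comp S.val :=
    fun u v huv => hsep <| funext fun i =>
      DFunLike.congr_fun huv (⟨f i, Submodule.subset_span ⟨i, rfl⟩⟩ : S)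
  calc Fintype.card V ≤ Nat.card (S →ₐ[K] K) := by
        rw [← Nat.card_eq_fintype_card]
        exact Nat.card_le_card_of_injective _ heval
    _ ≤ Module.finrank K S := card_algHom_le_finrank K S K
    _ ≤ Fintype.card ι := finrank_range_le_card f

variable {R : Type*} [CommRing R] [Algebra K R] {f : ι → R} {M : ι → ι → K} {χ : ι → ι → ι → K}

theorem smul_sum_smul_mem_span (f : ι → R) (a : K) (c : ι → K) :
    a • ∑ k, c k • f k ∈ Submodule.span K (Set.range f) :=
  Submodule.smul_mem _ _ <| Submodule.sum_mem _ fun k _ =>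
    Submodule.smul_mem _ _ <| Submodule.subset_span ⟨k, rfl⟩

theorem mul_mul_sub_smul_one_mem_span (hsq : ∀ i, f i * f i = 1)
    (hmul : ∀ i j, i ≠ j → f i * f j = M i j • ∑ k, χ i j k • f k) {i j : ι} (hij : i ≠ j)
    (k : ι) : f i * f j * f k - (M i j * χ i j k) • 1 ∈ Submodule.span K (Set.range f) := by
  classical
  have hexpand : f i * f j * f k - (M i j * χ i j k) • 1 =
      M i j • ∑ l ∈ Finset.univ.erase k, χ i j l • (f l * f k) := by
    rw [hmul i j hij, smul_mul_assoc, Finset.sum_mul,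
      ← Finset.add_sum_erase _ _ (Finset.mem_univ k)]
    simp only [smul_mul_assoc, hsq, smul_add, smul_smul, add_sub_cancel_left]
  rw [hexpand]
  refine Submodule.smul_mem _ _ <| Submodule.sum_mem _ fun l hl => Submodule.smul_mem _ _ ?_
  rw [hmul l k (Finset.ne_of_mem_erase hl)]
  exact smul_sum_smul_mem_span f _ _

theorem one_mem_span_of_ne (hsq : ∀ i, f i * f i = 1)
    (hmul : ∀ i j, i ≠ j → f i * f j = M i j • ∑ k, χ i j k • f k)
    {i j k : ι} (hij : i ≠ j) (hjk : j ≠ k) (hcyc : χ j k i = χ i j k) (hχ : χ i j k ≠ 0)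
    (hM : M i j ≠ M j k) : 1 ∈ Submodule.span K (Set.range f) := by
  have hdiff := Submodule.sub_mem _ (mul_mul_sub_smul_one_mem_span hsq hmul hjk i)
    (mul_mul_sub_smul_one_mem_span hsq hmul hij k)
  have hsmul : f j * f k * f i - (M j k * χ j k i) • (1 : R) -
      (f i * f j * f k - (M i j * χ i j k) • 1) = ((M i j - M j k) * χ i j k) • 1 := by
    rw [hcyc, show f j * f k * f i = f i * f j * f k by ring, sub_sub_sub_cancel_left,
      ← sub_smul, sub_mul]
  rw [hsmul] at hdiff
  exact (Submodule.smul_mem_iff _ (mul_ne_zero (sub_ne_zero.mpr hM) hχ)).mp hdiff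

end SpanAlgebra

section Balanced

open Finset

variable {ι : Type*}

theorem card_erase_erase_of_mem [DecidableEq ι] {s : Finset ι} {i j : ι} (hi : i ∈ s) (hj : j ∈ s)
    (hij : i ≠ j) : #((s.erase i).erase j) = #s - 2 := by
  rw [card_erase_of_mem (mem_erase.mpr ⟨hij.symm, hj⟩), card_erase_of_mem hi, Nat.sub_sub]

/-- A sign function on triples of distinct elements that changes sign under transpositions, such as
the chirotope of a uniform rank 3 oriented matroid. The Grassmann–Plücker relations are not
required. -/
structure IsAlternatingSign (χ : ι → ι → ι → ℤ) : Prop where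
  isUnit : ∀ {i j k}, i ≠ j → i ≠ k → j ≠ k → IsUnit (χ i j k)
  swap_left : ∀ i j k, χ j i k = -χ i j k
  swap_right : ∀ i j k, χ i k j = -χ i j k

namespace IsAlternatingSign

variable {χ : ι → ι → ι → ℤ}

theorem rotate (hχ : IsAlternatingSign χ) (i j k : ι) : χ j k i = χ i j k := by
  rw [hχ.swap_right, hχ.swap_left, neg_neg]

theorem apply_right_eq_zero (hχ : IsAlternatingSign χ) (i j : ι) : χ i j j = 0 :=
  self_eq_neg.mp (hχ.swap_right i j j)

theorem apply_left_eq_zero (hχ : IsAlternatingSign χ) (i j : ι) : χ i j i = 0 := by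
  rw [hχ.swap_right, self_eq_neg.mp (hχ.swap_left i i j), neg_zero]

end IsAlternatingSign

theorem exists_ne_of_skew [Fintype ι] {M : ι → ι → ℤ} (hskew : ∀ i j, i ≠ j → M j i = -M i j)
    (hM : ∀ i j, i ≠ j → M i j ≠ 0) (hι : 4 ≤ Fintype.card ι) :
    ∃ i j k, i ≠ j ∧ i ≠ k ∧ j ≠ k ∧ M i j ≠ M j k := by
  classical
  obtain ⟨t, -, ht⟩ := exists_subset_card_eq (s := (univ : Finset ι)) hι
  obtain ⟨a, b, c, d, hab, hac, had, hbc, hbd, hcd, -⟩ := card_eq_four.mp ht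
  by_contra! heq
  have habc := heq a b c hab hac hbc
  have habd := heq a b d hab had hbd
  have hdbc := heq d b c hbd.symm hcd.symm hbc
  have hbd_skew := hskew b d hbd
  have hab_ne := hM a b hab
  omega

variable [Fintype ι]

/-- A sign vector with product `1` whose weighted sums `∑ₖ χ(i,j,k) xₖ` are all `±1`. For the dual
chirotope `χ` of an oriented matroid, the sums say that reorienting by `x` leaves as many positive
as negative elements, up to one, in the circuit avoiding `i` and `j`; the product selects one of
each pair `±x` when the number of elements is odd. -/
structure IsBalanced (χ : ι → ι → ι → ℤ) (x : ι → ℤ) : Prop where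
  isUnit : ∀ i, IsUnit (x i)
  prod_eq_one : ∏ i, x i = 1
  isUnit_sum : ∀ i j, i ≠ j → IsUnit (∑ k, χ i j k * x k)

variable {χ : ι → ι → ι → ℤ} {q : ℕ}

section PairSign

variable [DecidableEq ι]

/-- The sign for which every balanced vector `x` on `2q + 3` elements satisfies
`xᵢ xⱼ = pairSign q χ i j * ∑ₖ χ(i,j,k) xₖ`. -/
def pairSign (q : ℕ) (χ : ι → ι → ι → ℤ) (i j : ι) : ℤ :=
  (-1) ^ q * ∏ k ∈ (univ.erase i).erase j, χ i j k

theorem card_erase_erase_univ (hι : Fintype.card ι = 2 * q + 3) {i j : ι} (hij : i ≠ j) :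
    #((univ.erase i).erase j) = 2 * q + 1 := by
  rw [card_erase_erase_of_mem (mem_univ i) (mem_univ j) hij, card_univ, hι]
  rfl

theorem IsAlternatingSign.isUnit_of_mem_erase_erase (hχ : IsAlternatingSign χ) {i j k : ι}
    (hij : i ≠ j) (hk : k ∈ (univ.erase i).erase j) : IsUnit (χ i j k) := by
  obtain ⟨hkj, hk⟩ := mem_erase.mp hk
  exact hχ.isUnit hij (ne_of_mem_erase hk).symm hkj.symm

theorem isUnit_pairSign (hχ : IsAlternatingSign χ) (q : ℕ) {i j : ι} (hij : i ≠ j) :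
    IsUnit (pairSign q χ i j) :=
  (isUnit_neg_one.pow q).mul <|
    IsUnit.prod_iff.mpr fun _ hk => hχ.isUnit_of_mem_erase_erase hij hk

theorem pairSign_swap (hχ : IsAlternatingSign χ) (hι : Fintype.card ι = 2 * q + 3) {i j : ι}
    (hij : i ≠ j) : pairSign q χ j i = -pairSign q χ i j := by
  have hodd : Odd #((univ.erase i).erase j) := ⟨q, card_erase_erase_univ hι hij⟩
  simp only [pairSign, hχ.swap_left i j, erase_right_comm (a := j), prod_neg, hodd.neg_one_pow]
  ring

theorem IsBalanced.mul_eq_pairSign_mul_sum {x : ι → ℤ} (hx : IsBalanced χ x)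
    (hχ : IsAlternatingSign χ) (hι : Fintype.card ι = 2 * q + 3) {i j : ι} (hij : i ≠ j) :
    x i * x j = pairSign q χ i j * ∑ k, χ i j k * x k := by
  have hj : j ∈ univ.erase i := mem_erase.mpr ⟨hij.symm, mem_univ j⟩
  have hsum : ∑ k, χ i j k * x k = ∑ k ∈ (univ.erase i).erase j, χ i j k * x k := by
    rw [← add_sum_erase _ _ (mem_univ i), ← add_sum_erase _ _ hj, hχ.apply_left_eq_zero,
      hχ.apply_right_eq_zero, zero_mul, zero_mul, zero_add, zero_add]
  have hprod : x i * x j * ∏ k ∈ (univ.erase i).erase j, x k = 1 := by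
    rw [mul_assoc, mul_prod_erase _ _ hj, mul_prod_erase _ _ (mem_univ i), hx.prod_eq_one]
  have hpair : ∏ k ∈ (univ.erase i).erase j, x k = x i * x j := by
    have hsq := Int.isUnit_mul_self ((hx.isUnit i).mul (hx.isUnit j))
    exact mul_left_cancel₀ ((hx.isUnit i).mul (hx.isUnit j)).ne_zero (hprod.trans hsq.symm)
  have hsign : ∑ k, χ i j k * x k = pairSign q χ i j * (x i * x j) := by
    rw [hsum, sum_eq_neg_one_pow_mul_prod
      (fun k hk => (hχ.isUnit_of_mem_erase_erase hij hk).mul (hx.isUnit k))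
      (card_erase_erase_univ hι hij) (hsum ▸ hx.isUnit_sum i j hij), prod_mul_distrib, hpair,
      pairSign, mul_assoc]
  rw [hsign, ← mul_assoc, Int.isUnit_mul_self (isUnit_pairSign hχ q hij), one_mul]

end PairSign

theorem card_le_card_of_isBalanced {V : Type*} [Fintype V] {x : V → ι → ℤ}
    (hχ : IsAlternatingSign χ) (hι : Fintype.card ι = 2 * q + 3) (hq : 1 ≤ q)
    (hinj : Function.Injective x) (hx : ∀ v, IsBalanced χ (x v)) :
    Fintype.card V ≤ Fintype.card ι := by
  classical
  let f : ι → V → ℚ := fun i v => x v i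
  have hsq : ∀ i, f i * f i = 1 := fun i => funext fun v => by
    simp only [f, Pi.mul_apply, Pi.one_apply]
    exact_mod_cast Int.isUnit_mul_self ((hx v).isUnit i)
  have hmul : ∀ i j, i ≠ j →
      f i * f j = (pairSign q χ i j : ℚ) • ∑ k, (χ i j k : ℚ) • f k := fun i j hij => by
    ext v
    simp only [f, Pi.mul_apply, Pi.smul_apply, Finset.sum_apply, smul_eq_mul]
    exact_mod_cast (hx v).mul_eq_pairSign_mul_sum hχ hι hij
  have hone : 1 ∈ Submodule.span ℚ (Set.range f) := by
    obtain ⟨i, j, k, hij, hik, hjk, hM⟩ := exists_ne_of_skew (M := pairSign q χ)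
      (fun _ _ hij => pairSign_swap hχ hι hij) (fun _ _ hij => (isUnit_pairSign hχ q hij).ne_zero)
      (by omega)
    exact one_mem_span_of_ne hsq hmul hij hjk (by exact_mod_cast hχ.rotate i j k)
      (by exact_mod_cast (hχ.isUnit hij hik hjk).ne_zero) (by exact_mod_cast hM)
  refine card_le_card_of_mul_mem_span (f := f) hone (fun i j => ?_) fun u v huv =>
    hinj <| funext fun i => Int.cast_injective (congrFun huv i)
  rcases eq_or_ne i j with rfl | hij
  · rwa [hsq]
  · rw [hmul i j hij]
    exact smul_sum_smul_mem_span f _ _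

end Balanced

section TopTravel

open Finset

variable {A B : ℕ → ℕ → ℤ} {r n k : ℕ}

theorem rowChange_eq_some {i c d : ℕ} : rowChange A n i c = some d ↔
    d ≤ n ∧ c < d ∧ A i d ≠ A i c ∧ ∀ d' < d, c < d' → A i d' = A i c := by
  simp only [rowChange, List.find?_range_eq_some, decide_eq_true_eq, List.mem_range,
    Bool.not_eq_true', decide_eq_false_iff_not, not_and, not_not, Nat.lt_succ_iff]
  tauto

theorem exists_rowChange_le {i c d : ℕ} (hdn : d ≤ n) (hcd : c < d) (hne : A i d ≠ A i c) :
    ∃ e ≤ d, rowChange A n i c = some e := by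
  classical
  have hex : ∃ e, c < e ∧ A i e ≠ A i c := ⟨d, hcd, hne⟩
  have hle : Nat.find hex ≤ d := Nat.find_min' hex ⟨hcd, hne⟩
  obtain ⟨hlt, hchange⟩ := Nat.find_spec hex
  exact ⟨_, hle, rowChange_eq_some.mpr ⟨hle.trans hdn, hlt, hchange, fun d' hd' hcd' =>
    not_not.mp fun h => Nat.find_min hex hd' ⟨hcd', h⟩⟩⟩

theorem exists_ttEntry_succ_le {t e k l : ℕ} (he : ttEntry B n (t + 1) = some e) (hek : e ≤ k)
    (hkl : k < l) (hln : l ≤ n) (hne : B (t + 1) k ≠ B (t + 1) l) :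
    ∃ e' ≤ l, ttEntry B n (t + 2) = some e' := by
  suffices h : ∃ e' ≤ l, rowChange B n (t + 1) e = some e' by simpa [ttEntry, he] using h
  by_cases hl : B (t + 1) l = B (t + 1) e
  · have hk : B (t + 1) k ≠ B (t + 1) e := fun h => hne (h.trans hl.symm)
    have hlt : e < k := hek.lt_of_ne fun h => hk (by rw [h])
    obtain ⟨e', he', hrow⟩ := exists_rowChange_le (hkl.le.trans hln) hlt hk
    exact ⟨e', he'.trans hkl.le, hrow⟩
  · exact exists_rowChange_le hln (hek.trans_lt hkl) hl

theorem one_le_of_ttEntry_eq_some : ∀ {i c : ℕ}, ttEntry B n i = some c → 1 ≤ c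
  | 1, c, h => (Option.some.inj h).le
  | i + 2, c, h => by
    obtain ⟨d, -, hrow⟩ := Option.bind_eq_some_iff.mp h
    exact Nat.one_le_of_lt (rowChange_eq_some.mp hrow).2.1

theorem ttEntry_add_eq_none {i : ℕ} (h : ttEntry B n (i + 1) = none) :
    ∀ m, ttEntry B n (i + 1 + m) = none
  | 0 => h
  | m + 1 => by
    have ih := ttEntry_add_eq_none h m
    rw [add_right_comm] at ih
    rw [show i + 1 + (m + 1) = i + m + 2 by ring, ttEntry, ih, Option.bind_none]

theorem ttFollows.mem_iff {D : Finset ℕ} (h : ttFollows B n D) {c : ℕ} :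
    c ∈ D ↔ ∃ i, 2 ≤ i ∧ ttEntry B n i = some c := by
  refine (h.2 c).trans ⟨fun ⟨i, hi, _, hc⟩ => ⟨i, hi, hc⟩, fun ⟨i, hi, hc⟩ => ⟨i, hi, ?_, hc⟩⟩
  by_contra! hlt
  obtain ⟨m, rfl⟩ := Nat.exists_eq_add_of_lt hlt
  have hnone := ttEntry_add_eq_none h.1 m
  rw [add_right_comm] at hnone
  simp [hnone] at hc

theorem ttFollows.unique {D D' : Finset ℕ} (h : ttFollows B n D) (h' : ttFollows B n D') :
    D = D' :=
  Finset.ext fun _ => h.mem_iff.trans h'.mem_iff.symm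

theorem ttEntry_eq_of_eq_neg (h : ∀ i, ∀ j ∈ Icc 1 n, B i j = -A i j) :
    ∀ i, ttEntry B n i = ttEntry A n i
  | 0 => rfl
  | 1 => rfl
  | i + 2 => by
    rw [ttEntry, ttEntry, ttEntry_eq_of_eq_neg h (i + 1)]
    refine Option.bind_congr fun c hc => List.find?_congr fun d hd => ?_
    have hc1 := one_le_of_ttEntry_eq_some hc
    rw [decide_eq_decide]
    refine and_congr_right fun hcd => ?_
    have hdn : d ≤ n := Nat.lt_succ_iff.mp (List.mem_range.mp hd)
    rw [h _ d (mem_Icc.mpr ⟨by omega, hdn⟩), h _ c (mem_Icc.mpr ⟨hc1, by omega⟩), ne_eq, neg_inj]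

theorem ttFollows.of_eq_neg {D : Finset ℕ} (hD : ttFollows A n D)
    (h : ∀ i, ∀ j ∈ Icc 1 n, B i j = -A i j) : ttFollows B n D := by
  simpa only [ttFollows, ttEntry_eq_of_eq_neg h] using hD

theorem IsNeighborly.of_eq_neg (hA : IsNeighborly A r n k)
    (h : ∀ i, ∀ j ∈ Icc 1 n, B i j = -A i j) : IsNeighborly B r n k := by
  intro S hS hcard
  have hneg : ∀ i, ∀ j ∈ Icc 1 n, reorient B S i j = -reorient A S i j := fun i j hj => by
    simp only [reorient, h i j hj]
    split_ifs <;> rfl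
  rw [ttPositive, ttEntry_eq_of_eq_neg hneg]
  exact hA S hS hcard

theorem IsNeighborlyTravel.exists_even (hn : Odd n) {D : Finset ℕ}
    (hD : IsNeighborlyTravel A r n k D) : ∃ R ⊆ Icc 1 n, Even #R ∧
      ttFollows (reorient A R) n D ∧ IsNeighborly (reorient A R) r n k := by
  obtain ⟨R, hR, hfollows, hneighborly⟩ := hD
  rcases Nat.even_or_odd #R with heven | hodd
  · exact ⟨R, hR, heven, hfollows, hneighborly⟩
  · have hneg : ∀ i, ∀ j ∈ Icc 1 n, reorient A (Icc 1 n \ R) i j = -reorient A R i j :=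
      fun i j hj => by by_cases hjR : j ∈ R <;> simp only [reorient, mem_sdiff, hj, hjR] <;> simp
    have heven : Even #(Icc 1 n \ R) := by
      rw [card_sdiff_of_subset hR, Nat.card_Icc, Nat.add_sub_cancel]
      exact hn.tsub_odd hodd
    exact ⟨_, sdiff_subset, heven, hfollows.of_eq_neg hneg, hneighborly.of_eq_neg hneg⟩

end TopTravel

section Position

open Finset

variable {C : Finset ℕ} {k l m : ℕ}

/-- The 1-indexed position of `m ∈ C` when `C` is listed in increasing order. -/
def position (C : Finset ℕ) (m : ℕ) : ℕ := #{x ∈ C | x ≤ m}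

/-- `k` and `l` are successive elements of `C` in increasing order. -/
structure IsNext (C : Finset ℕ) (k l : ℕ) : Prop where
  left_mem : k ∈ C
  right_mem : l ∈ C
  lt : k < l
  le_of_lt : ∀ m ∈ C, k < m → l ≤ m

theorem one_le_position (hm : m ∈ C) : 1 ≤ position C m :=
  card_pos.mpr ⟨m, mem_filter.mpr ⟨hm, le_rfl⟩⟩

theorem position_le_card (C : Finset ℕ) (m : ℕ) : position C m ≤ #C := card_filter_le _ _

theorem position_Icc {n : ℕ} (hm : m ≤ n) : position (Icc 1 n) m = m := by
  have hfilter : {x ∈ Icc 1 n | x ≤ m} = Icc 1 m := by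
    ext x
    simp only [mem_filter, mem_Icc]
    omega
  rw [position, hfilter, Nat.card_Icc, Nat.add_sub_cancel]

theorem position_erase_add_ite (hk : k ∈ C) (m : ℕ) :
    position (C.erase k) m + (if k ≤ m then 1 else 0) = position C m := by
  rw [position, position, filter_erase]
  split_ifs with h
  · exact card_erase_add_one (mem_filter.mpr ⟨hk, h⟩)
  · rw [erase_eq_of_notMem (by simp [h]), add_zero]

theorem IsNext.position_eq (h : IsNext C k l) : position C l = position C k + 1 := by
  have hfilter : {x ∈ C | x ≤ l} = insert l {x ∈ C | x ≤ k} := by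
    ext x
    rw [mem_insert, mem_filter, mem_filter]
    constructor
    · rintro ⟨hx, hxl⟩
      rcases le_or_gt x k with hxk | hkx
      · exact .inr ⟨hx, hxk⟩
      · exact .inl (hxl.antisymm (h.le_of_lt x hx hkx))
    · rintro (rfl | ⟨hx, hxk⟩)
      · exact ⟨h.right_mem, le_rfl⟩
      · exact ⟨hx, hxk.trans h.lt.le⟩
  rw [position, hfilter, card_insert_of_notMem (by simp [h.lt]), position]

theorem exists_isNext_of_one_lt_position (hm : m ∈ C) (h : 1 < position C m) :
    ∃ p, IsNext C p m := by
  have hne : {x ∈ C | x < m}.Nonempty := by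
    obtain ⟨a, ha, ham⟩ := exists_mem_ne h m
    obtain ⟨haC, hle⟩ := mem_filter.mp ha
    exact ⟨a, mem_filter.mpr ⟨haC, hle.lt_of_ne ham⟩⟩
  obtain ⟨hp, hpm⟩ := mem_filter.mp (max'_mem _ hne)
  refine ⟨_, hp, hm, hpm, fun x hx hlt => ?_⟩
  by_contra! hxm
  exact hlt.not_ge (le_max' _ x (mem_filter.mpr ⟨hx, hxm⟩))

theorem IsNext.position_erase_eq (h : IsNext C k l) (hm : m ∈ C) (hmk : m ≠ k) :
    position (C.erase k) m = position (C.erase l) m := by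
  have hk := position_erase_add_ite h.left_mem m
  have hl := position_erase_add_ite h.right_mem m
  have hiff : k ≤ m ↔ l ≤ m :=
    ⟨fun hkm => h.le_of_lt m hm (hkm.lt_of_ne hmk.symm), h.lt.le.trans⟩
  simp only [hiff] at hk
  omega

theorem IsNext.position_erase_left (h : IsNext C k l) :
    position (C.erase k) l = position C k := by
  have hl := position_erase_add_ite h.left_mem l
  rw [if_pos h.lt.le, h.position_eq] at hl
  omega

theorem IsNext.position_erase_right (h : IsNext C k l) :
    position (C.erase l) k = position C k := by
  have hk := position_erase_add_ite h.right_mem k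
  rwa [if_neg h.lt.not_ge, add_zero] at hk

end Position

section Circuits

open Finset

variable {A B : ℕ → ℕ → ℤ} {r n : ℕ} {C R : Finset ℕ}

theorem exists_ttEntry_position_le (hC : C ⊆ Icc 1 n)
    (h : ∀ k l, IsNext C k l → B (position C k) k ≠ B (position C k) l) (m : ℕ) (hm : m ∈ C) :
    ∃ e ≤ m, ttEntry B n (position C m) = some e := by
  induction m using Nat.strong_induction_on with | _ m ih =>
  obtain ⟨hm1, hmn⟩ := mem_Icc.mp (hC hm)
  rcases (one_le_position hm).eq_or_lt with h1 | h1
  · exact ⟨1, hm1, by rw [← h1]; rfl⟩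
  · obtain ⟨p, hp⟩ := exists_isNext_of_one_lt_position hm h1
    obtain ⟨e, hep, he⟩ := ih p hp.lt hp.left_mem
    obtain ⟨t, ht⟩ := Nat.exists_eq_add_of_le' (one_le_position hp.left_mem)
    have hchange := h p m hp
    rw [ht] at he hchange
    rw [hp.position_eq, ht]
    exact exists_ttEntry_succ_le he hep hp.lt hmn hchange

theorem ttPositive_of_forall_isNext (hC : C ⊆ Icc 1 n) (hcard : #C = r + 1)
    (h : ∀ k l, IsNext C k l → B (position C k) k ≠ B (position C k) l) :
    ttPositive B r n := by
  have hne : C.Nonempty := card_pos.mp (by omega)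
  have hlast : position C (C.max' hne) = r + 1 := by
    rw [← hcard, position, filter_true_of_mem fun x hx => le_max' C x hx]
  obtain ⟨e, -, he⟩ := exists_ttEntry_position_le hC h _ (max'_mem C hne)
  rw [ttPositive, ← hlast, he, Option.isSome_some]

/-- For an `r`-set `T = {b₁ < ⋯ < bᵣ}` of columns, the product `a_{1,b₁} ⋯ a_{r,bᵣ}`: the value on
the basis `T` of the chirotope of the Lawrence oriented matroid of `A`. -/
def basisSign (A : ℕ → ℕ → ℤ) (T : Finset ℕ) : ℤ := ∏ m ∈ T, A (position T m) m

/-- The sign of `m ∈ C` in the signed circuit of the Lawrence oriented matroid of `A` supported on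
the `(r + 1)`-set `C`. -/
def circuitSign (A : ℕ → ℕ → ℤ) (C : Finset ℕ) (m : ℕ) : ℤ :=
  (-1) ^ position C m * basisSign A (C.erase m)

/-- The sign vector of a set `R` of columns: `-1` on `R` and `1` elsewhere. -/
def columnSign (R : Finset ℕ) (m : ℕ) : ℤ := if m ∈ R then -1 else 1

theorem isUnit_columnSign (R : Finset ℕ) (m : ℕ) : IsUnit (columnSign R m) := by
  unfold columnSign
  split_ifs <;> simp

theorem prod_columnSign_Icc (hR : R ⊆ Icc 1 n) :
    ∏ m ∈ Icc 1 n, columnSign R m = (-1) ^ #R := by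
  simp only [columnSign, prod_ite_mem, inter_eq_right.mpr hR, prod_const]

theorem columnSign_injOn : Set.InjOn (fun R (m : Icc 1 n) => columnSign R m) {R | R ⊆ Icc 1 n} := by
  intro R hR R' hR' h
  ext m
  by_cases hm : m ∈ Icc 1 n
  · have hsign : columnSign R m = columnSign R' m := congrFun h ⟨m, hm⟩
    unfold columnSign at hsign
    split_ifs at hsign <;> simp_all
  · exact iff_of_false (fun h => hm (hR h)) (fun h => hm (hR' h))

theorem reorient_apply (A : ℕ → ℕ → ℤ) (R : Finset ℕ) (i j : ℕ) :
    reorient A R i j = columnSign R j * A i j := by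
  unfold reorient columnSign
  split_ifs <;> simp

theorem IsSignMatrix.isUnit (hA : IsSignMatrix r n A) {i j : ℕ} (hi : 1 ≤ i) (hir : i ≤ r)
    (hj : j ∈ Icc 1 n) : IsUnit (A i j) :=
  Int.isUnit_iff.mpr (hA i j hi hir (mem_Icc.mp hj).1 (mem_Icc.mp hj).2)

theorem IsSignMatrix.reorient (hA : IsSignMatrix r n A) (R : Finset ℕ) :
    IsSignMatrix r n (reorient A R) := fun i j hi hir hj hjn => by
  rw [reorient_apply, ← Int.isUnit_iff]
  exact (isUnit_columnSign R j).mul (hA.isUnit hi hir (mem_Icc.mpr ⟨hj, hjn⟩))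

theorem isUnit_basisSign (hA : IsSignMatrix r n A) {T : Finset ℕ} (hT : T ⊆ Icc 1 n)
    (hcard : #T ≤ r) : IsUnit (basisSign A T) :=
  IsUnit.prod_iff.mpr fun m hm =>
    hA.isUnit (one_le_position hm) ((position_le_card T m).trans hcard) (hT hm)

theorem isUnit_circuitSign (hA : IsSignMatrix r n A) (hC : C ⊆ Icc 1 n) (hcard : #C = r + 1)
    {m : ℕ} (hm : m ∈ C) : IsUnit (circuitSign A C m) :=
  (isUnit_neg_one.pow _).mul <|
    isUnit_basisSign hA ((erase_subset m C).trans hC) (by rw [card_erase_of_mem hm, hcard]; rfl)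

theorem basisSign_mul_basisSign_of_isNext (hA : IsSignMatrix r n A) (hC : C ⊆ Icc 1 n)
    (hcard : #C = r + 1) {k l : ℕ} (h : IsNext C k l) :
    basisSign A (C.erase k) * basisSign A (C.erase l) =
      A (position C k) k * A (position C k) l := by
  have hl : l ∈ C.erase k := mem_erase.mpr ⟨h.lt.ne', h.right_mem⟩
  have hk : k ∈ C.erase l := mem_erase.mpr ⟨h.lt.ne, h.left_mem⟩
  set P := ∏ m ∈ (C.erase k).erase l, A (position (C.erase k) m) m with hP
  have hkP : basisSign A (C.erase k) = A (position C k) l * P := by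
    rw [basisSign, ← mul_prod_erase _ _ hl, h.position_erase_left]
  have hlP : basisSign A (C.erase l) = A (position C k) k * P := by
    rw [basisSign, ← mul_prod_erase _ _ hk, h.position_erase_right, hP, erase_right_comm]
    congr 1
    refine prod_congr rfl fun m hm => ?_
    obtain ⟨-, hmk, hmC⟩ := by simpa only [mem_erase] using hm
    rw [h.position_erase_eq hmC hmk]
  have hunit : IsUnit P := by
    refine isUnit_of_mul_isUnit_right (hkP ▸ isUnit_basisSign hA ((erase_subset k C).trans hC) ?_)
    rw [card_erase_of_mem h.left_mem, hcard]
    rfl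
  rw [hkP, hlP]
  linear_combination A (position C k) k * A (position C k) l * Int.isUnit_mul_self hunit

theorem circuitSign_mul_circuitSign_of_isNext (hA : IsSignMatrix r n A) (hC : C ⊆ Icc 1 n)
    (hcard : #C = r + 1) {k l : ℕ} (h : IsNext C k l) :
    circuitSign A C k * circuitSign A C l = -(A (position C k) k * A (position C k) l) := by
  have hpow : (-1 : ℤ) ^ position C k * (-1) ^ position C l = -1 := by
    rw [h.position_eq, pow_succ, ← mul_assoc, ← mul_pow]
    simp
  rw [← basisSign_mul_basisSign_of_isNext hA hC hcard h, circuitSign, circuitSign]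
  linear_combination basisSign A (C.erase k) * basisSign A (C.erase l) * hpow

theorem circuitSign_reorient (A : ℕ → ℕ → ℤ) (R : Finset ℕ) {m : ℕ} (hm : m ∈ C) :
    circuitSign (reorient A R) C m =
      (∏ x ∈ C, columnSign R x) * (circuitSign A C m * columnSign R m) := by
  have hsq := Int.isUnit_mul_self (isUnit_columnSign R m)
  simp only [circuitSign, basisSign, reorient_apply, prod_mul_distrib]
  rw [← mul_prod_erase C _ hm]
  linear_combination (-(-1) ^ position C m * (∏ x ∈ C.erase m, columnSign R x) *
    ∏ x ∈ C.erase m, A (position (C.erase m) x) x) * hsq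

theorem ttPositive_of_circuitSign_eq (hA : IsSignMatrix r n A) (hC : C ⊆ Icc 1 n)
    (hcard : #C = r + 1) {s : ℤ} (hs : ∀ m ∈ C, circuitSign A C m = s) : ttPositive A r n := by
  refine ttPositive_of_forall_isNext hC hcard fun k l hkl heq => ?_
  have hmul := circuitSign_mul_circuitSign_of_isNext hA hC hcard hkl
  have hunit := isUnit_circuitSign hA hC hcard hkl.left_mem
  rw [hs l hkl.right_mem, ← hs k hkl.left_mem, Int.isUnit_mul_self hunit, ← heq] at hmul
  linarith [mul_self_nonneg (A (position C k) k)]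

theorem IsNeighborly.lt_card_circuitSign_eq {k : ℕ} (hN : IsNeighborly A r n k)
    (hA : IsSignMatrix r n A) (hC : C ⊆ Icc 1 n) (hcard : #C = r + 1) {s : ℤ} (hs : IsUnit s) :
    k < #{m ∈ C | circuitSign A C m = s} := by
  by_contra! hle
  set S := {m ∈ C | circuitSign A C m = s} with hS
  have hflip : ∀ m ∈ C, circuitSign A C m * columnSign S m = -s := fun m hm => by
    by_cases hmS : circuitSign A C m = s
    · simp [columnSign, hS, hm, hmS]
    · simp only [columnSign, hS, mem_filter, hmS, and_false, if_false, mul_one]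
      exact (Int.isUnit_ne_iff_eq_neg (isUnit_circuitSign hA hC hcard hm) hs).mp hmS
  refine hN S ((filter_subset _ _).trans hC) hle ?_
  exact ttPositive_of_circuitSign_eq (hA.reorient S) hC hcard fun m hm => by
    rw [circuitSign_reorient A S hm, hflip m hm]

theorem IsNeighborly.isUnit_sum_circuitSign {k : ℕ} (hA : IsSignMatrix (2 * k + 2) n A)
    (hN : IsNeighborly (reorient A R) (2 * k + 2) n k) (hC : C ⊆ Icc 1 n)
    (hcard : #C = 2 * k + 3) : IsUnit (∑ m ∈ C, circuitSign A C m * columnSign R m) := by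
  have hAR := hA.reorient R
  have hsum : IsUnit (∑ m ∈ C, circuitSign (reorient A R) C m) :=
    isUnit_sum_of_lt_card (fun m hm => isUnit_circuitSign hAR hC hcard hm) hcard
      (hN.lt_card_circuitSign_eq hAR hC hcard isUnit_one)
      (hN.lt_card_circuitSign_eq hAR hC hcard isUnit_neg_one)
  rw [sum_congr rfl fun m hm => circuitSign_reorient A R hm, ← mul_sum] at hsum
  exact isUnit_of_mul_isUnit_right hsum

end Circuits

section DualChirotope

open Finset

variable {A : ℕ → ℕ → ℤ} {r n k : ℕ}

/-- The chirotope of the dual of the Lawrence oriented matroid of an `(n - 3) × n` matrix `A`: on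
`i < j < k` it is the value of the chirotope of `A` on the complement of `{i, j, k}`, with the usual
sign `(-1)^(i + j + k)` of chirotope duality, and the `Int.sign` factors make it alternating. -/
def dualChirotope (A : ℕ → ℕ → ℤ) (n i j k : ℕ) : ℤ :=
  Int.sign (j - i) * Int.sign (k - i) * Int.sign (k - j) * (-1) ^ (i + j + k) *
    basisSign A ((((Icc 1 n).erase i).erase j).erase k)

theorem isUnit_sign_sub {a b : ℕ} (hab : a ≠ b) : IsUnit (Int.sign ((b : ℤ) - a)) := by
  rw [Int.isUnit_iff_natAbs_eq, Int.natAbs_sign_of_ne_zero]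
  omega

theorem isAlternatingSign_dualChirotope (hA : IsSignMatrix r (r + 3) A) :
    IsAlternatingSign fun i j k : Icc 1 (r + 3) => dualChirotope A (r + 3) i j k where
  isUnit {i j k} hij hik hjk := by
    have hval : ∀ {a b : Icc 1 (r + 3)}, a ≠ b → (a : ℕ) ≠ b := Subtype.coe_injective.ne
    refine ((((isUnit_sign_sub (hval hij)).mul (isUnit_sign_sub (hval hik))).mul
      (isUnit_sign_sub (hval hjk))).mul (isUnit_neg_one.pow _)).mul (isUnit_basisSign hA ?_ ?_)
    · exact (erase_subset _ _).trans ((erase_subset _ _).trans (erase_subset _ _))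
    · have hk : (k : ℕ) ∈ ((Icc 1 (r + 3)).erase i).erase j :=
        mem_erase.mpr ⟨hval hjk.symm, mem_erase.mpr ⟨hval hik.symm, k.2⟩⟩
      rw [card_erase_of_mem hk, card_erase_erase_of_mem i.2 j.2 (hval hij), Nat.card_Icc]
      rfl
  swap_left i j k := by
    rw [dualChirotope, dualChirotope, erase_right_comm (a := (j : ℕ)),
      ← neg_sub (j : ℤ) i, Int.sign_neg]
    ring
  swap_right i j k := by
    rw [dualChirotope, dualChirotope, erase_right_comm (a := (k : ℕ)),
      ← neg_sub (k : ℤ) j, Int.sign_neg]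
    ring

theorem sign_mul_sign_mul_neg_one_pow {i j : ℕ} (hi : i ∈ Icc 1 n) (hj : j ∈ Icc 1 n)
    (hij : i ≠ j) (hk : k ∈ ((Icc 1 n).erase i).erase j) :
    Int.sign ((k : ℤ) - i) * Int.sign ((k : ℤ) - j) * (-1) ^ k =
      (-1) ^ position (((Icc 1 n).erase i).erase j) k := by
  have hsign : ∀ a : ℕ, a ≠ k → Int.sign ((k : ℤ) - a) = -(-1) ^ (if a ≤ k then 1 else 0) := by
    intro a hak
    split_ifs with h
    · rw [Int.sign_eq_one_of_pos (by omega)]; rfl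
    · rw [Int.sign_eq_neg_one_of_neg (by omega)]; rfl
  obtain ⟨hkj, hki, hkn⟩ := by simpa only [mem_erase] using hk
  have hpos : position (((Icc 1 n).erase i).erase j) k + (if j ≤ k then 1 else 0) +
      (if i ≤ k then 1 else 0) = k := by
    rw [position_erase_add_ite (mem_erase.mpr ⟨hij.symm, hj⟩), position_erase_add_ite hi,
      position_Icc (mem_Icc.mp hkn).2]
  have hpow : (-1 : ℤ) ^ k = (-1) ^ (position (((Icc 1 n).erase i).erase j) k +
      (if j ≤ k then 1 else 0) + (if i ≤ k then 1 else 0)) := by rw [hpos]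
  rw [hsign i hki.symm, hsign j hkj.symm, hpow]
  split_ifs <;> simp [pow_succ]

theorem dualChirotope_eq_mul_circuitSign {i j : ℕ} (hi : i ∈ Icc 1 n) (hj : j ∈ Icc 1 n)
    (hij : i ≠ j) (hk : k ∈ ((Icc 1 n).erase i).erase j) :
    dualChirotope A n i j k =
      Int.sign (j - i) * (-1) ^ (i + j) * circuitSign A (((Icc 1 n).erase i).erase j) k := by
  rw [dualChirotope, circuitSign, ← sign_mul_sign_mul_neg_one_pow hi hj hij hk]
  ring

theorem isBalanced_columnSign (hA : IsSignMatrix (2 * k + 2) (2 * k + 5) A) {R : Finset ℕ}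
    (hR : R ⊆ Icc 1 (2 * k + 5)) (heven : Even #R)
    (hN : IsNeighborly (reorient A R) (2 * k + 2) (2 * k + 5) k) :
    IsBalanced (fun i j l : Icc 1 (2 * k + 5) => dualChirotope A (2 * k + 5) i j l)
      fun i => columnSign R i where
  isUnit i := isUnit_columnSign R i
  prod_eq_one := by
    rw [prod_coe_sort (Icc 1 (2 * k + 5)) (columnSign R), prod_columnSign_Icc hR,
      heven.neg_one_pow]
  isUnit_sum i j hij := by
    have hij' : (i : ℕ) ≠ j := Subtype.coe_injective.ne hij
    have hj : (j : ℕ) ∈ (Icc 1 (2 * k + 5)).erase i := mem_erase.mpr ⟨hij'.symm, j.2⟩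
    set C := ((Icc 1 (2 * k + 5)).erase i).erase j with hCdef
    have hC : C ⊆ Icc 1 (2 * k + 5) := (erase_subset _ _).trans (erase_subset _ _)
    have hcard : #C = 2 * k + 3 := by
      rw [hCdef, card_erase_erase_of_mem i.2 j.2 hij', Nat.card_Icc]
      rfl
    have hsum : ∑ l : Icc 1 (2 * k + 5), dualChirotope A (2 * k + 5) i j l * columnSign R l =
        (Int.sign (j - i) * (-1) ^ ((i : ℕ) + j)) *
          ∑ l ∈ C, circuitSign A C l * columnSign R l := by
      rw [sum_coe_sort (Icc 1 (2 * k + 5))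
        fun l => dualChirotope A (2 * k + 5) i j l * columnSign R l,
        ← add_sum_erase _ _ i.2, ← add_sum_erase _ _ hj, mul_sum]
      simp only [dualChirotope, sub_self, Int.sign_zero, mul_zero, zero_mul, zero_add]
      refine sum_congr rfl fun l hl => ?_
      rw [← mul_assoc, ← dualChirotope_eq_mul_circuitSign i.2 j.2 hij' hl, dualChirotope]
    rw [hsum]
    exact ((isUnit_sign_sub hij').mul (isUnit_neg_one.pow _)).mul
      (hN.isUnit_sum_circuitSign hA hC hcard)

theorem ncard_even_neighborly_le (hA : IsSignMatrix (2 * k + 2) (2 * k + 5) A) :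
    {R : Finset ℕ | R ⊆ Icc 1 (2 * k + 5) ∧ Even #R ∧
      IsNeighborly (reorient A R) (2 * k + 2) (2 * k + 5) k}.ncard ≤ 2 * k + 5 := by
  set X := {R : Finset ℕ | R ⊆ Icc 1 (2 * k + 5) ∧ Even #R ∧
    IsNeighborly (reorient A R) (2 * k + 2) (2 * k + 5) k}
  have hX : X.Finite := (Set.finite_Iic (Icc 1 (2 * k + 5))).subset fun R hR => hR.1
  have := hX.fintype
  have hι : Fintype.card (Icc 1 (2 * k + 5)) = 2 * (k + 1) + 3 := by
    rw [Fintype.card_coe, Nat.card_Icc]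
    omega
  have hle := card_le_card_of_isBalanced (V := X) (isAlternatingSign_dualChirotope hA) hι
    (Nat.le_add_left 1 k) (fun R R' h => Subtype.ext (columnSign_injOn R.2.1 R'.2.1 h))
    (fun R => isBalanced_columnSign hA R.2.1 R.2.2.1 R.2.2.2)
  rw [hι] at hle
  rw [← Nat.card_coe_set_eq, Nat.card_eq_fintype_card]
  exact hle

end DualChirotope

theorem statement_15_general (k : ℕ) (A : ℕ → ℕ → ℤ)
    (hA : IsSignMatrix (2 * k + 2) (2 * k + 5) A) :
    {D : Finset ℕ | IsPlainTravel (2 * k + 2) (2 * k + 5) D ∧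
      IsNeighborlyTravel A (2 * k + 2) (2 * k + 5) k D}.ncard ≤ 2 * k + 5 := by
  have hn : Odd (2 * k + 5) := ⟨k + 2, by ring⟩
  choose! R hR heven hfollows hneighborly using
    fun D (hD : IsNeighborlyTravel A (2 * k + 2) (2 * k + 5) k D) => hD.exists_even hn
  refine (Set.ncard_le_ncard_of_injOn R (fun D hD => ?_) (fun D hD D' hD' h => ?_) ?_).trans
    (ncard_even_neighborly_le hA)
  · exact ⟨hR D hD.2, heven D hD.2, hneighborly D hD.2⟩
  · exact (hfollows D hD.2).unique (h ▸ hfollows D' hD'.2)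
  · exact (Set.finite_Iic (Finset.Icc 1 (2 * k + 5))).subset fun S hS => hS.1

/-- Every 8×11 sign matrix has at most 11 3-neighborly plain travels. -/
theorem statement_15 (A : ℕ → ℕ → ℤ) (hA : IsSignMatrix 8 11 A) :
    {D : Finset ℕ | IsPlainTravel 8 11 D ∧ IsNeighborlyTravel A 8 11 3 D}.ncard ≤ 11 :=
  statement_15_general 3 A hA
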